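/- Let n = 100 and let x, y ∈ S_100 be the permutations given in the context, with z = (x·y)⁻¹. Then (x, y, z) is a nice triple; the cycle types of x, y, z are 4^25, 10^8·5^4 and 2^35 respectively; and the subgroup ⟨x, y⟩ of S_100 has cardinality 88704000 (the order of Aut(HS)). -/

import Mathlib

/-- `permInd s` = (sum of the cycle type of `s`) − (number of entries of the cycle type of `s`),
i.e. `n` minus the number of cycles of `s` when fixed points are counted as cycles. -/
def permInd {n : ℕ} (s : Equiv.Perm (Fin n)) : ℕ :=
  s.cycleType.sum - Multiset.card s.cycleType

/-- A `MulAction` is preprimitive if it is pretransitive and every block is trivial. -/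
def IsPreprimitive (G : Type*) (X : Type*) [Group G] [MulAction G X] : Prop :=
  MulAction.IsPretransitive G X ∧
    ∀ B : Set X, MulAction.IsBlock G B → MulAction.IsTrivialBlock B

/-- A triple `(x, y, z)` of permutations in `S_n` is *nice*:
(i) `x * y * z = 1`; (ii) `G = ⟨x, y⟩` is neither the alternating nor the symmetric group;
(iii) `G` acts primitively on `Fin n` and is almost simple; (iv) the triple has genus 0;
(v) the triple is rigid in `G`; (vi) `x`, `y`, `z` lie in rational conjugacy classes of `G`. -/
def IsNice {n : ℕ} (x y z : Equiv.Perm (Fin n)) : Prop :=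
  x * y * z = 1 ∧
  (Subgroup.closure {x, y} ≠ alternatingGroup (Fin n) ∧
    Subgroup.closure {x, y} ≠ ⊤) ∧
  IsPreprimitive (Subgroup.closure {x, y}) (Fin n) ∧
  (∃ S : Subgroup (Subgroup.closure {x, y}), S.Normal ∧ IsSimpleGroup S ∧
    (∃ a b : S, a * b ≠ b * a) ∧
    Subgroup.centralizer (S : Set (Subgroup.closure {x, y})) = ⊥) ∧
  permInd x + permInd y + permInd z = 2 * (n - 1) ∧
  (∀ x' y' z' : Equiv.Perm (Fin n),
    x' * y' * z' = 1 →
    Subgroup.closure {x', y'} = Subgroup.closure {x, y} →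
    (∃ g ∈ Subgroup.closure {x, y}, g * x * g⁻¹ = x') →
    (∃ g ∈ Subgroup.closure {x, y}, g * y * g⁻¹ = y') →
    (∃ g ∈ Subgroup.closure {x, y}, g * z * g⁻¹ = z') →
    ∃ g ∈ Subgroup.closure {x, y},
      g * x * g⁻¹ = x' ∧ g * y * g⁻¹ = y' ∧ g * z * g⁻¹ = z') ∧
  ∀ g ∈ ({x, y, z} : Set (Equiv.Perm (Fin n))), ∀ k : ℤ,
    Int.gcd k (orderOf g) = 1 →
    ∃ h ∈ Subgroup.closure {x, y}, h * g * h⁻¹ = g ^ k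

/-- The permutation given by a list of (disjoint) cycles, each written as a list of points. -/
def permOfCycles {n : ℕ} (cs : List (List (Fin n))) : Equiv.Perm (Fin n) :=
  (cs.map List.formPerm).prod

def x : Equiv.Perm (Fin 100) := permOfCycles [
  [1, 23, 53, 86],
  [2, 36, 29, 43],
  [3, 15, 46, 6],
  [4, 80, 71, 81],
  [5, 75, 16, 47],
  [7, 32, 60, 8],
  [9, 76, 100, 51],
  [10, 50, 49, 34],
  [11, 28, 74, 84],
  [12, 72, 37, 52],
  [13, 21, 96, 88],
  [14, 41, 40, 87],
  [17, 42, 45, 79],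
  [18, 63, 19, 20],
  [22, 99, 39, 89],
  [24, 59, 77, 38],
  [25, 68, 26, 35],
  [27, 69, 73, 48],
  [30, 92, 33, 82],
  [31, 56, 93, 58],
  [44, 98, 67, 64],
  [54, 95, 85, 62],
  [55, 65, 94, 61],
  [57, 78, 83, 97],
  [66, 90, 70, 91]]

def y : Equiv.Perm (Fin 100) := permOfCycles [
  [1, 75, 5, 71, 15],
  [2, 43, 52, 89, 39],
  [3, 18, 100, 33, 35, 26, 58, 32, 53, 23],
  [4, 81, 47, 16, 86, 7, 42, 38, 77, 59],
  [6, 41, 14, 87, 82, 76, 9, 97, 19, 63],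
  [8, 60, 93, 56, 13, 61, 36, 99, 70, 45],
  [10, 65, 55, 88, 12, 29, 94, 34, 49, 50],
  [11, 44, 64, 25, 92],
  [17, 72, 96, 69, 28, 30, 40, 46, 80, 24],
  [20, 83, 78, 57, 51],
  [21, 31, 68, 67, 98, 84, 74, 27, 48, 73],
  [22, 37, 79, 90, 66, 95, 54, 62, 85, 91]]

/-!
The group `G = ⟨x, y⟩` acts on the 100 vertices of the Higman–Sims graph. Iterated colour refinement
bounds the orbits of the stabilizers in `G` of the points `0, 9, 11, 15, 19, 24` from above, and
explicit words in `x` and `y` bound them from below, so that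
`|G| = 100 * 22 * 21 * 20 * 16 * 6 = 88704000`.

Let `S` be the subgroup of even elements. The point stabilizers in `S`, and in `G`, have orbits of
length `1`, `22` and `77`; since neither `23` nor `78` divides `100`, both groups are primitive. A
nontrivial normal subgroup `N` of `S` is transitive. If `N` is regular, then it has order `100` and
its unique Sylow `5`-subgroup is a nontrivial normal subgroup of `S`, hence transitive, which is
impossible. Otherwise the stabilizer of a point in `N` is a nontrivial normal subgroup of the point
stabilizer in `S`, which is primitive on the orbit of length `22`, so `11` divides `|N|`. As `11`
exactly divides `|S|`, all elements of order `11` of `S` lie in `N`, and they generate `S`.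

Put `z = (x * y)⁻¹`, an involution with `1100` conjugates in `G`. Rigidity amounts to this: if `q`
is a conjugate of `z` such that `q * y⁻¹` is conjugate to `x` and generates `G` together with `y`,
then `q` is conjugate to `z` under the centralizer of `y`. This is checked for each `q`; in the
cases where `q * y⁻¹` has the cycle type of `x` but does not generate `G` with `y`, both elements
preserve a common set of points.
-/

namespace HigmanSims

open Equiv MulAction
open scoped Pointwise

section Primitivity

variable {M α : Type*} [Group M] [MulAction M α]

theorem orbit_stabilizer_subset_of_isBlock {B : Set α} (hB : IsBlock M B) {a d : α} (ha : a ∈ B)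
    (hd : d ∈ B) : orbit (stabilizer M a) d ⊆ B := by
  rintro _ ⟨⟨g, hg⟩, rfl⟩
  rw [← mem_stabilizer_iff.mp (hB.stabilizer_le ha hg)]
  exact Set.smul_mem_smul_set hd

theorem isPreprimitive_of_stabilizer_transitive [IsPretransitive M α] (a : α)
    (h : ∀ c d, c ≠ a → d ≠ a → d ∈ orbit (stabilizer M a) c) :
    MulAction.IsPreprimitive M α := by
  refine .of_isTrivialBlock_base a fun {B} ha hB ↦ ?_
  by_cases hsub : B.Subsingleton
  · exact .inl hsub
  obtain ⟨c, hc, hca⟩ := (Set.not_subsingleton_iff.mp hsub).exists_ne a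
  refine .inr (Set.eq_univ_of_forall fun d ↦ ?_)
  by_cases hda : d = a
  · exact hda ▸ ha
  exact orbit_stabilizer_subset_of_isBlock hB ha hc (h c d hca hda)

theorem notMem_orbit_stabilizer_of_ncard_ne_one {a b : α}
    (h : (orbit (stabilizer M a) b).ncard ≠ 1) : a ∉ orbit (stabilizer M a) b := by
  intro ha
  have hfix : orbit (stabilizer M a) a = {a} :=
    Set.eq_singleton_iff_unique_mem.mpr ⟨mem_orbit_self a, by rintro _ ⟨⟨g, hg⟩, rfl⟩; exact hg⟩
  exact h (by rw [← orbit_eq_iff.mpr ha, hfix, Set.ncard_singleton])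

variable [Finite α]

theorem isPreprimitive_orbit_of_ncard {b c : α} (hc : c ∈ orbit M b)
    (hne : (orbit (stabilizer M b) c).ncard ≠ 1)
    (hcard : (orbit (stabilizer M b) c).ncard + 1 = (orbit M b).ncard) :
    MulAction.IsPreprimitive M (orbit M b) := by
  have hb := notMem_orbit_stabilizer_of_ncard_ne_one hne
  have hsub : insert b (orbit (stabilizer M b) c) ⊆ orbit M b := by
    rw [← orbit_eq_iff.mpr hc]
    exact Set.insert_subset (orbit_eq_iff.mpr hc ▸ mem_orbit_self b) (orbit_subgroup_subset _ c)
  have heq : insert b (orbit (stabilizer M b) c) = orbit M b :=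
    Set.eq_of_subset_of_ncard_le hsub (by rw [Set.ncard_insert_of_notMem hb, hcard])
  have mem_suborbit (d : orbit M b) (hd : d ≠ ⟨b, mem_orbit_self b⟩) :
      (d : α) ∈ orbit (stabilizer M b) c :=
    (heq.ge d.2).resolve_left fun h ↦ hd (Subtype.ext h)
  refine isPreprimitive_of_stabilizer_transitive ⟨b, mem_orbit_self b⟩ fun d e hd he ↦ ?_
  obtain ⟨⟨g, hg⟩, hge⟩ : (e : α) ∈ orbit (stabilizer M b) (d : α) :=
    orbit_eq_iff.mpr (mem_suborbit d hd) ▸ mem_suborbit e he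
  exact ⟨⟨g, Subtype.ext hg⟩, Subtype.ext hge⟩

variable {a b c : α}

theorem eq_or_mem_suborbit (hb : (orbit (stabilizer M a) b).ncard ≠ 1)
    (hc : (orbit (stabilizer M a) c).ncard ≠ 1)
    (hbc : (orbit (stabilizer M a) b).ncard ≠ (orbit (stabilizer M a) c).ncard)
    (hsum : (orbit (stabilizer M a) b).ncard + (orbit (stabilizer M a) c).ncard + 1 = Nat.card α)
    (d : α) : d = a ∨ d ∈ orbit (stabilizer M a) b ∨ d ∈ orbit (stabilizer M a) c := by
  have hdisj : Disjoint (orbit (stabilizer M a) b) (orbit (stabilizer M a) c) :=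
    (orbit.eq_or_disjoint b c).resolve_left fun h ↦ hbc (by rw [h])
  have ha : a ∉ orbit (stabilizer M a) b ∪ orbit (stabilizer M a) c := fun h ↦
    h.elim (notMem_orbit_stabilizer_of_ncard_ne_one hb)
      (notMem_orbit_stabilizer_of_ncard_ne_one hc)
  have huniv : insert a (orbit (stabilizer M a) b ∪ orbit (stabilizer M a) c) = Set.univ :=
    Set.eq_of_subset_of_ncard_le (Set.subset_univ _) <| by
      rw [Set.ncard_insert_of_notMem ha, Set.ncard_union_eq hdisj, hsum, Set.ncard_univ]
  exact huniv.ge (Set.mem_univ d)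

theorem isPreprimitive_of_suborbits [IsPretransitive M α]
    (hb : (orbit (stabilizer M a) b).ncard ≠ 1) (hc : (orbit (stabilizer M a) c).ncard ≠ 1)
    (hbc : (orbit (stabilizer M a) b).ncard ≠ (orbit (stabilizer M a) c).ncard)
    (hsum : (orbit (stabilizer M a) b).ncard + (orbit (stabilizer M a) c).ncard + 1 = Nat.card α)
    (hb_dvd : ¬ (orbit (stabilizer M a) b).ncard + 1 ∣ Nat.card α)
    (hc_dvd : ¬ (orbit (stabilizer M a) c).ncard + 1 ∣ Nat.card α) :
    MulAction.IsPreprimitive M α := by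
  have cases := eq_or_mem_suborbit hb hc hbc hsum
  refine .of_isTrivialBlock_base a fun {B} ha hB ↦ ?_
  have orbit_subset {d e : α} (hd : d ∈ B) (hde : d ∈ orbit (stabilizer M a) e) :
      orbit (stabilizer M a) e ⊆ B := by
    rw [← orbit_eq_iff.mpr hde]
    exact orbit_stabilizer_subset_of_isBlock hB ha hd
  have dvd_of_eq {e : α} (he : (orbit (stabilizer M a) e).ncard ≠ 1)
      (h : B = insert a (orbit (stabilizer M a) e)) :
      (orbit (stabilizer M a) e).ncard + 1 ∣ Nat.card α := by
    rw [← Set.ncard_insert_of_notMem (notMem_orbit_stabilizer_of_ncard_ne_one he), ← h]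
    exact hB.ncard_dvd_card ⟨a, ha⟩
  by_cases hBb : ∃ d ∈ B, d ∈ orbit (stabilizer M a) b <;>
    by_cases hBc : ∃ d ∈ B, d ∈ orbit (stabilizer M a) c
  · obtain ⟨⟨d, hd, hdb⟩, ⟨e, he, hec⟩⟩ := hBb, hBc
    exact .inr (Set.eq_univ_of_forall fun f ↦ (cases f).elim (· ▸ ha)
      fun h ↦ h.elim (orbit_subset hd hdb ·) (orbit_subset he hec ·))
  · obtain ⟨d, hd, hdb⟩ := hBb
    refine absurd (dvd_of_eq hb (subset_antisymm (fun f hf ↦ ?_) ?_)) hb_dvd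
    · exact (cases f).imp_right fun h ↦ h.resolve_right fun h ↦ hBc ⟨f, hf, h⟩
    · exact Set.insert_subset ha (orbit_subset hd hdb)
  · obtain ⟨d, hd, hdc⟩ := hBc
    refine absurd (dvd_of_eq hc (subset_antisymm (fun f hf ↦ ?_) ?_)) hc_dvd
    · exact (cases f).imp_right fun h ↦ h.resolve_left fun h ↦ hBb ⟨f, hf, h⟩
    · exact Set.insert_subset ha (orbit_subset hd hdc)
  · refine .inl fun d hd e he ↦ ?_
    have eq_base (f : α) (hf : f ∈ B) : f = a :=
      (cases f).resolve_right fun h ↦ h.elim (hBb ⟨f, hf, ·⟩) (hBc ⟨f, hf, ·⟩)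
    rw [eq_base d hd, eq_base e he]

end Primitivity

section NormalSubgroups

variable {M α : Type*} [Group M] [MulAction M α]

theorem isPretransitive_of_normal_ne_bot [MulAction.IsPreprimitive M α] [FaithfulSMul M α]
    {N : Subgroup M} [N.Normal] (hN : N ≠ ⊥) : IsPretransitive N α := by
  refine IsQuasiPreprimitive.isPretransitive_of_normal fun hfix ↦ hN ?_
  refine (Subgroup.eq_bot_iff_forall N).mpr fun g hg ↦ FaithfulSMul.eq_of_smul_eq_smul (α := α) ?_
  intro a
  rw [one_smul]
  exact hfix.ge (Set.mem_univ a) ⟨g, hg⟩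

theorem card_dvd_card_of_normal_ne_bot [MulAction.IsPreprimitive M α] [FaithfulSMul M α]
    [Finite α] [Nonempty α] {N : Subgroup M} [N.Normal] (hN : N ≠ ⊥) :
    Nat.card α ∣ Nat.card N := by
  have := isPretransitive_of_normal_ne_bot (α := α) hN
  rw [← index_stabilizer_of_transitive N (Classical.arbitrary α)]
  exact Subgroup.index_dvd_card _

theorem card_dvd_prime_pow_of_normal [MulAction.IsPreprimitive M α] [FaithfulSMul M α]
    [Finite M] [Nonempty α] [Finite α] {N : Subgroup M} [N.Normal] (p : ℕ) [Fact p.Prime]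
    (hp : p ∣ Nat.card N) (hsylow : ∀ d, d ∣ Nat.card N → d ≡ 1 [MOD p] → d = 1) :
    ∃ k, Nat.card α ∣ p ^ k := by
  obtain ⟨P⟩ : Nonempty (Sylow p N) := inferInstance
  have hunique : Nat.card (Sylow p N) = 1 :=
    hsylow _ (P.card_dvd_index.trans (Subgroup.index_dvd_card _)) (card_sylow_modEq_one p N)
  have : Subsingleton (Sylow p N) := (Nat.card_eq_one_iff_unique.mp hunique).1
  have := P.characteristic_of_subsingleton
  have hP : (P : Subgroup N).map N.subtype ≠ ⊥ := by
    rw [Ne, Subgroup.map_eq_bot_iff_of_injective _ N.subtype_injective]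
    exact P.ne_bot_of_dvd_card hp
  obtain ⟨k, hk⟩ := P.2.exists_card_eq
  refine ⟨k, hk ▸ ?_⟩
  rw [← Subgroup.card_map_of_injective N.subtype_injective]
  exact card_dvd_card_of_normal_ne_bot hP

theorem mem_normal_of_pow_prime_eq_one {N : Subgroup M} [N.Normal] {p : ℕ} (hp : p.Prime)
    (hN : p ∣ Nat.card N) (hM : ¬ p ^ 2 ∣ Nat.card M) {g : M} (hg : g ^ p = 1) : g ∈ N := by
  have hindex : Nat.Coprime p N.index := (Nat.Prime.coprime_iff_not_dvd hp).mpr fun h ↦ hM <| by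
    rw [sq, ← N.card_mul_index]
    exact mul_dvd_mul hN h
  rw [← QuotientGroup.eq_one_iff]
  refine orderOf_eq_one_iff.mp (Nat.dvd_one.mp (hindex ▸ Nat.dvd_gcd ?_ ?_))
  · exact orderOf_dvd_of_pow_eq_one (congrArg (QuotientGroup.mk' N) hg)
  · exact orderOf_dvd_natCard _

theorem mem_normal_of_mul_pow_prime_eq_one {N : Subgroup M} [N.Normal] {p : ℕ} (hp : p.Prime)
    (hN : p ∣ Nat.card N) (hM : ¬ p ^ 2 ∣ Nat.card M) {g u : M} (hu : u ^ p = 1)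
    (hgu : (g * u) ^ p = 1) : g ∈ N :=
  (N.mul_mem_cancel_right (mem_normal_of_pow_prime_eq_one hp hN hM hu)).mp
    (mem_normal_of_pow_prime_eq_one hp hN hM hgu)

theorem mem_or_mul_mem_of_mem_closure {K : Subgroup M} {x y : M} (hxx : x * x ∈ K) (hy : y ∈ K)
    (hxy : x * y * x⁻¹ ∈ K) {g : M} (hg : g ∈ Subgroup.closure {x, y}) : g ∈ K ∨ x * g ∈ K := by
  induction hg using Subgroup.closure_induction_left with
  | one => exact .inl K.one_mem
  | mul_left s hs g _ ih =>
    obtain rfl | rfl := hs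
    · exact ih.symm.imp_right fun h ↦ by simpa [mul_assoc] using K.mul_mem hxx h
    · exact ih.imp (K.mul_mem hy) fun h ↦ by simpa [mul_assoc] using K.mul_mem hxy h
  | inv_mul_cancel s hs g _ ih =>
    obtain rfl | rfl := hs
    · refine ih.symm.imp (fun h ↦ ?_) fun h ↦ by rwa [mul_inv_cancel_left]
      simpa [mul_assoc] using K.mul_mem (K.inv_mem hxx) h
    · refine ih.imp (K.mul_mem (K.inv_mem hy)) fun h ↦ ?_
      simpa [mul_assoc] using K.mul_mem (K.inv_mem hxy) h

theorem eq_one_of_commute_of_stabilizer_fixes_only {H : Subgroup (Perm α)} [IsPretransitive H α]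
    {a : α} (hfix : ∀ d, (∀ g : H, g • a = a → g • d = d) → d = a) {c : Perm α}
    (hc : ∀ g ∈ H, g * c = c * g) : c = 1 := by
  have comm (g : H) (d : α) : (g : Perm α) (c d) = c ((g : Perm α) d) := Perm.congr_fun (hc g g.2) d
  have hca : c a = a := hfix _ fun g hg ↦ (comm g a).trans (congrArg c hg)
  refine Equiv.ext fun d ↦ ?_
  obtain ⟨g, rfl⟩ := exists_smul_eq H a d
  exact (comm g a).symm.trans (congrArg (g : Perm α) hca)

end NormalSubgroups

section Conjugacy

variable {M : Type*} [Group M] {H : Subgroup M}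

theorem exists_conj_eq_zpow_of_conj_eq_pow {g h : M} (hh : h ∈ H) {a n : ℕ} (hn : orderOf g = n)
    (hpos : 0 < n) (hconj : h * g * h⁻¹ = g ^ a)
    (hgen : ∀ k < n, k.Coprime n → ∃ j < n, a ^ j % n = k) {k : ℤ}
    (hk : Int.gcd k (orderOf g) = 1) : ∃ h ∈ H, h * g * h⁻¹ = g ^ k := by
  have hconj_pow (j : ℕ) : h ^ j * g * (h ^ j)⁻¹ = g ^ a ^ j := by
    induction j with
    | zero => simp
    | succ j ih =>
      calc h ^ (j + 1) * g * (h ^ (j + 1))⁻¹ = h * (h ^ j * g * (h ^ j)⁻¹) * h⁻¹ := by group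
        _ = (h * g * h⁻¹) ^ a ^ j := by rw [ih, conj_pow]
        _ = g ^ a ^ (j + 1) := by rw [hconj, ← pow_mul, pow_succ']
  obtain ⟨r, hr⟩ : ∃ r : ℕ, (r : ℤ) = k % n :=
    ⟨_, Int.toNat_of_nonneg (Int.emod_nonneg k (by omega))⟩
  have hr_coprime : r.Coprime n := by
    rwa [Nat.Coprime, ← Int.gcd_natCast_natCast, hr, Int.gcd_emod, ← hn]
  have hr_lt : r < n := by have := Int.emod_lt_of_pos k (Int.natCast_pos.mpr hpos); omega
  obtain ⟨j, -, hj⟩ := hgen r hr_lt hr_coprime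
  refine ⟨h ^ j, H.pow_mem hh j, ?_⟩
  rw [hconj_pow, ← zpow_mod_orderOf, hn, ← hr, zpow_natCast, ← hj, ← hn, pow_mod_orderOf]

theorem conj_mem_of_mem_closure [Finite M] {s C : Set M} (hC : ∀ a ∈ s, ∀ t ∈ C, a * t * a⁻¹ ∈ C)
    {z : M} (hz : z ∈ C) {g : M} (hg : g ∈ Subgroup.closure s) : g * z * g⁻¹ ∈ C := by
  rw [← Subgroup.mem_toSubmonoid, Subgroup.closure_toSubmonoid_of_finite] at hg
  induction hg using Submonoid.closure_induction_left with
  | one => simpa using hz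
  | mul_left a ha g _ ih => simpa [mul_assoc] using hC a ha _ ih

theorem closure_conj_pair {b u v : M} (hb : b ∈ H) (h : Subgroup.closure {u, v} = H) :
    Subgroup.closure {b⁻¹ * u * b, b⁻¹ * v * b} = H := by
  have himage : ({b⁻¹ * u * b, b⁻¹ * v * b} : Set M) = MulAut.conj b⁻¹ '' {u, v} := by
    simp [Set.image_pair]
  rw [himage, ← MonoidHom.coe_coe, ← MonoidHom.map_closure, h]
  exact Subgroup.mem_normalizer_iff_map_conj_eq.mp (Subgroup.le_normalizer (H.inv_mem hb))

theorem rigid_of_forall_conj {x y z : M}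
    (h : ∀ g ∈ H, (∃ a ∈ H, a * x * a⁻¹ = (y * (g * z * g⁻¹))⁻¹) →
      Subgroup.closure {(y * (g * z * g⁻¹))⁻¹, y} = H →
      ∃ c ∈ H, c * y = y * c ∧ c * z * c⁻¹ = g * z * g⁻¹)
    (hxyz : x * y * z = 1) {x' y' z' : M} (hxyz' : x' * y' * z' = 1)
    (hH : Subgroup.closure {x', y'} = H) (hx : ∃ g ∈ H, g * x * g⁻¹ = x')
    (hy : ∃ g ∈ H, g * y * g⁻¹ = y') (hz : ∃ g ∈ H, g * z * g⁻¹ = z') :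
    ∃ g ∈ H, g * x * g⁻¹ = x' ∧ g * y * g⁻¹ = y' ∧ g * z * g⁻¹ = z' := by
  obtain ⟨a, ha, rfl⟩ := hx
  obtain ⟨b, hb, rfl⟩ := hy
  obtain ⟨c, hc, rfl⟩ := hz
  have hx_eq : b⁻¹ * (a * x * a⁻¹) * b = (y * (b⁻¹ * c * z * (b⁻¹ * c)⁻¹))⁻¹ := by
    rw [mul_assoc, mul_eq_one_iff_eq_inv] at hxyz'
    rw [hxyz']
    group
  have hy_eq : b⁻¹ * (b * y * b⁻¹) * b = y := by group
  obtain ⟨d, hd, hdy, hdz⟩ := h (b⁻¹ * c) (H.mul_mem (H.inv_mem hb) hc)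
    ⟨b⁻¹ * a, H.mul_mem (H.inv_mem hb) ha, by rw [← hx_eq]; group⟩
    (by rw [← hx_eq]; simpa only [hy_eq] using closure_conj_pair hb hH)
  have hbdy : b * d * y * (b * d)⁻¹ = b * y * b⁻¹ := by
    rw [mul_assoc b, hdy]; group
  have hbdz : b * d * z * (b * d)⁻¹ = c * z * c⁻¹ := by
    calc b * d * z * (b * d)⁻¹ = b * (d * z * d⁻¹) * b⁻¹ := by group
      _ = c * z * c⁻¹ := by rw [hdz]; group
  refine ⟨b * d, H.mul_mem hb hd, ?_, hbdy, hbdz⟩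
  have hprod : b * d * x * (b * d)⁻¹ * (b * d * y * (b * d)⁻¹) * (b * d * z * (b * d)⁻¹) = 1 := by
    calc _ = b * d * (x * y * z) * (b * d)⁻¹ := by group
      _ = 1 := by rw [hxyz]; group
  rw [hbdy, hbdz, ← hxyz'] at hprod
  exact mul_right_cancel (mul_right_cancel hprod)

end Conjugacy

section CycleType

theorem cycleType_permOfCycles {n : ℕ} {cs : List (List (Fin n))}
    (hcs : cs.flatten.Nodup) (hlen : ∀ c ∈ cs, 2 ≤ c.length) :
    (permOfCycles cs).cycleType = (cs.map List.length : List ℕ) := by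
  obtain ⟨hnodup, hdisj⟩ := List.nodup_flatten.mp hcs
  rw [permOfCycles, Perm.cycleType_eq (cs.map List.formPerm) rfl]
  · rw [List.map_map]
    refine congrArg _ (List.map_congr_left fun c hc ↦ ?_)
    rw [Function.comp_apply, Function.comp_apply, List.support_formPerm_of_nodup c (hnodup c hc)
      (by rintro a rfl; simpa using hlen _ hc), List.toFinset_card_of_nodup (hnodup c hc)]
  · intro σ hσ
    obtain ⟨c, hc, rfl⟩ := List.mem_map.mp hσ
    exact List.isCycle_formPerm (hnodup c hc) (hlen c hc)
  · refine List.pairwise_map.mpr (hdisj.imp_of_mem fun ha hb hab ↦ ?_)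
    exact (List.formPerm_disjoint_iff (hnodup _ ha) (hnodup _ hb) (hlen _ ha) (hlen _ hb)).mpr hab

theorem cycleType_eq_replicate_of_sq_eq_one {α : Type*} [Fintype α] [DecidableEq α] {σ : Perm α}
    (hσ : σ ^ 2 = 1) : σ.cycleType = Multiset.replicate (σ.support.card / 2) 2 := by
  have htwo : ∀ m ∈ σ.cycleType, m = 2 := fun m hm ↦ by
    have hdvd : m ∣ 2 := (Perm.dvd_of_mem_cycleType hm).trans (orderOf_dvd_of_pow_eq_one hσ)
    exact le_antisymm (Nat.le_of_dvd two_pos hdvd) (Perm.two_le_of_mem_cycleType hm)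
  have hrep := Multiset.eq_replicate_card.mpr htwo
  rw [← Perm.sum_cycleType, hrep]
  simp

end CycleType

section PointStabilizer

variable {α : Type*}

theorem apply_apply_eq_of_mem_closure {β : Type*} {A : Set (Perm α)} {c : α → β}
    (h : ∀ p ∈ A, ∀ a, c (p a) = c a) {p : Perm α} (hp : p ∈ Subgroup.closure A) (a : α) :
    c (p a) = c a := by
  induction hp using Subgroup.closure_induction generalizing a with
  | mem p hp => exact h p hp a
  | one => rfl
  | mul p q _ _ hp hq => exact (hp (q a)).trans (hq a)
  | inv p _ hp => rw [← hp, show p (p⁻¹ a) = a from p.apply_symm_apply a]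

/-- The elements of the permutation group `H` fixing every point of the list `B`. -/
def pointStabilizer (H : Subgroup (Perm α)) (B : List α) : Subgroup (Perm α) :=
  H ⊓ fixingSubgroup (Perm α) {b | b ∈ B}

theorem mem_pointStabilizer {H : Subgroup (Perm α)} {B : List α} {p : Perm α} :
    p ∈ pointStabilizer H B ↔ p ∈ H ∧ ∀ b ∈ B, p b = b := by
  simp [pointStabilizer, mem_fixingSubgroup_iff]

variable (H : Subgroup (Perm α))

theorem pointStabilizer_nil : pointStabilizer H [] = H := by
  ext p
  simp [mem_pointStabilizer]

theorem orbit_pointStabilizer_singleton (a b : α) :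
    orbit (pointStabilizer H [a]) b = orbit (stabilizer H a) b := by
  ext c
  constructor
  · rintro ⟨⟨p, hp⟩, rfl⟩
    obtain ⟨hpH, hpa⟩ := mem_pointStabilizer.mp hp
    exact ⟨⟨⟨p, hpH⟩, hpa a (by simp)⟩, rfl⟩
  · rintro ⟨⟨⟨p, hp⟩, hpa⟩, rfl⟩
    exact ⟨⟨p, mem_pointStabilizer.mpr ⟨hp, by simpa using hpa⟩⟩, rfl⟩

theorem orbit_pointStabilizer_pair (a b c : α) :
    orbit (pointStabilizer H [b, a]) c = orbit (stabilizer (stabilizer H a) b) c := by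
  ext d
  constructor
  · rintro ⟨⟨p, hp⟩, rfl⟩
    obtain ⟨hpH, hpab⟩ := mem_pointStabilizer.mp hp
    exact ⟨⟨⟨⟨p, hpH⟩, hpab a (by simp)⟩, hpab b (by simp)⟩, rfl⟩
  · rintro ⟨⟨⟨⟨p, hp⟩, hpa⟩, hpb⟩, rfl⟩
    exact ⟨⟨p, mem_pointStabilizer.mpr ⟨hp, by simpa using ⟨hpb, hpa⟩⟩⟩, rfl⟩

theorem card_pointStabilizer_eq_ncard_orbit_mul (B : List α) (a : α) :
    Nat.card (pointStabilizer H B) =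
      (orbit (pointStabilizer H B) a).ncard * Nat.card (pointStabilizer H (a :: B)) := by
  have hle : pointStabilizer H (a :: B) ≤ pointStabilizer H B := fun p hp ↦ by
    rw [mem_pointStabilizer] at hp ⊢
    exact ⟨hp.1, fun b hb ↦ hp.2 b (List.mem_cons_of_mem a hb)⟩
  have hstab : (pointStabilizer H (a :: B)).subgroupOf (pointStabilizer H B) =
      stabilizer (pointStabilizer H B) a := by
    ext ⟨p, hp⟩
    rw [mem_pointStabilizer] at hp
    simpa [Subgroup.mem_subgroupOf, mem_pointStabilizer, hp.1, Subgroup.smul_def] using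
      fun _ ↦ hp.2
  rw [← Nat.card_congr (Subgroup.subgroupOfEquivOfLe hle).toEquiv, hstab, ← index_stabilizer,
    mul_comm, Subgroup.card_mul_index]

end PointStabilizer

section Tables

/-- The `i`-th base-`b` digit of `t`. A function from `{0, …, n - 1}` to `{0, …, b - 1}` is stored
as a numeral, on whose digits the kernel computes quickly. -/
def entry (b t i : ℕ) : ℕ := t / b ^ i % b

/-- The numeral storing the values of `f`, reduced modulo `b`, at `0, …, n - 1`. -/
def tabulate (b : ℕ) (f : ℕ → ℕ) : ℕ → ℕ
  | 0 => 0
  | n + 1 => tabulate b f n + f n % b * b ^ n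

variable {b : ℕ} (f : ℕ → ℕ)

theorem tabulate_lt_pow (hb : 0 < b) (n : ℕ) : tabulate b f n < b ^ n := by
  induction n with
  | zero => simp [tabulate]
  | succ n ih =>
    calc tabulate b f n + f n % b * b ^ n < b ^ n + f n % b * b ^ n := by gcongr
      _ = (f n % b + 1) * b ^ n := by ring
      _ ≤ b * b ^ n := Nat.mul_le_mul_right _ (Nat.mod_lt _ hb)
      _ = b ^ (n + 1) := (pow_succ' b n).symm

theorem entry_tabulate (hb : 0 < b) {n i : ℕ} (hi : i < n) :
    entry b (tabulate b f n) i = f i % b := by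
  induction n with
  | zero => omega
  | succ n ih =>
    unfold entry tabulate
    rcases Nat.lt_succ_iff_lt_or_eq.mp hi with hlt | rfl
    · obtain ⟨m, rfl⟩ := Nat.exists_eq_add_of_lt hlt
      have split : f (i + m + 1) % b * b ^ (i + m + 1) =
          b ^ i * (b * (f (i + m + 1) % b * b ^ m)) := by ring
      rw [split, Nat.add_mul_div_left _ _ (pow_pos hb i), Nat.add_mul_mod_self_left]
      exact ih hlt
    · rw [Nat.add_mul_div_right _ _ (pow_pos hb i), Nat.div_eq_of_lt (tabulate_lt_pow f hb i),
        zero_add, Nat.mod_mod]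

end Tables

section Encoding

variable {n : ℕ}

/-- `t` stores the images of `0, …, n - 1` under the permutation `p`. -/
def Encodes (t : ℕ) (p : Perm (Fin n)) : Prop :=
  ∀ i : Fin n, (p i : ℕ) = entry n t i

/-- The table of the product of two encoded permutations. -/
def mulTable (n s t : ℕ) : ℕ :=
  tabulate n (fun i ↦ entry n s (entry n t i)) n

/-- The table of `p * q * p'`, given tables `s`, `t` and `s'` of `p`, `q` and `p'`. -/
def sandwichTable (n s t s' : ℕ) : ℕ :=
  tabulate n (fun i ↦ entry n s (entry n t (entry n s' i))) n

variable {s t : ℕ} {p q : Perm (Fin n)}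

theorem Encodes.mul (hp : Encodes s p) (hq : Encodes t q) : Encodes (mulTable n s t) (p * q) := by
  intro i
  rw [mulTable, entry_tabulate _ i.pos i.isLt, ← hq i, ← hp, Nat.mod_eq_of_lt (p (q i)).isLt]
  rfl

theorem Encodes.sandwich {s' : ℕ} {p' : Perm (Fin n)} (hp : Encodes s p) (hq : Encodes t q)
    (hp' : Encodes s' p') : Encodes (sandwichTable n s t s') (p * q * p') := by
  intro i
  rw [sandwichTable, entry_tabulate _ i.pos i.isLt, ← hp' i, ← hq, ← hp,
    Nat.mod_eq_of_lt (p (q (p' i))).isLt]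
  rfl

theorem Encodes.unique (hp : Encodes t p) (hq : Encodes t q) : p = q :=
  Equiv.ext fun i ↦ Fin.ext ((hp i).trans (hq i).symm)

theorem val_pow_apply {f : ℕ → ℕ} (hp : ∀ i, (p i : ℕ) = f i) (k : ℕ) (i : Fin n) :
    ((p ^ k) i : ℕ) = f^[k] i := by
  induction k generalizing i with
  | zero => rfl
  | succ k ih => rw [pow_succ, Perm.mul_apply, ih, hp, Function.iterate_succ_apply]

theorem Encodes.pow_eq_one (hp : Encodes t p) {k : ℕ} (h : ∀ i < n, (entry n t)^[k] i = i) :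
    p ^ k = 1 :=
  Equiv.ext fun i ↦ Fin.ext ((val_pow_apply hp k i).trans (h i i.isLt))

variable {ι : Type*} {gen : ι → Perm (Fin n)} {genTable : ι → ℕ}

/-- The table of the permutation expressed by a word, given tables of the generators. -/
def wordTable (n : ℕ) (genTable : ι → ℕ) : FreeMagma ι → ℕ
  | .of a => genTable a
  | .mul v w => mulTable n (wordTable n genTable v) (wordTable n genTable w)

theorem encodes_wordTable (h : ∀ a, Encodes (genTable a) (gen a)) (w : FreeMagma ι) :
    Encodes (wordTable n genTable w) (FreeMagma.lift gen w) := by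
  induction w with
  | ih1 a => exact h a
  | ih2 v w hv hw => exact hv.mul hw

end Encoding

theorem lift_mem {ι M : Type*} [Group M] {H : Subgroup M} {gen : ι → M} (h : ∀ a, gen a ∈ H)
    (w : FreeMagma ι) : FreeMagma.lift gen w ∈ H := by
  induction w with
  | ih1 a => exact h a
  | ih2 v w hv hw => exact H.mul_mem hv hw

section Reach

variable {n : ℕ}

/-- The indicator table of the points that are mapped to `a` by a product of at most `k` of the
permutations with tables in `T`. -/
def reach (n : ℕ) (T : List ℕ) (a : ℕ) : ℕ → ℕ
  | 0 => tabulate 2 (fun i ↦ if i = a then 1 else 0) n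
  | k + 1 => tabulate 2 (fun i ↦ if entry 2 (reach n T a k) i = 1 ∨
      ∃ t ∈ T, entry 2 (reach n T a k) (entry n t i) = 1 then 1 else 0) n

theorem entry_indicator_eq_one {P : ℕ → Prop} [DecidablePred P] {i : ℕ} (hi : i < n) :
    entry 2 (tabulate 2 (fun i ↦ if P i then 1 else 0) n) i = 1 ↔ P i := by
  rw [entry_tabulate _ two_pos hi]
  split_ifs with h <;> simp [h]

theorem exists_apply_eq_of_reach {H : Subgroup (Perm (Fin n))} {T : List ℕ}
    (hT : ∀ t ∈ T, ∃ p ∈ H, Encodes t p) (a : Fin n) (k : ℕ) (i : Fin n)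
    (h : entry 2 (reach n T a k) i = 1) : ∃ p ∈ H, p i = a := by
  induction k generalizing i with
  | zero =>
    rw [reach, entry_indicator_eq_one i.isLt] at h
    exact ⟨1, H.one_mem, Fin.ext h⟩
  | succ k ih =>
    rw [reach, entry_indicator_eq_one i.isLt] at h
    rcases h with h | ⟨t, ht, h⟩
    · exact ih i h
    · obtain ⟨q, hq, hqt⟩ := hT t ht
      obtain ⟨p, hp, hpa⟩ := ih (q i) (by rwa [hqt i])
      exact ⟨p * q, H.mul_mem hp hq, hpa⟩

end Reach

section SearchTree

/-- Binary search trees of natural numbers. -/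
inductive SearchTree
  | leaf
  | node (l : SearchTree) (a : ℕ) (r : SearchTree)

namespace SearchTree

/-- Whether `a` is found in the tree by binary search. -/
def contains (a : ℕ) : SearchTree → Bool
  | leaf => false
  | node l b r => if a < b then l.contains a else if b < a then r.contains a else true

/-- Adds a number at the position where binary search expects it. -/
def insert (a : ℕ) : SearchTree → SearchTree
  | leaf => node leaf a leaf
  | node l b r => if a < b then node (l.insert a) b r else node l b (r.insert a)

/-- Adds the numbers of `todo` that are not yet present, together with whatever is reachable from
them through `next`, examining at most `k` candidates. -/
def grow (next : ℕ → List ℕ) : (k : ℕ) → (todo : List ℕ) → SearchTree → SearchTree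
  | k + 1, a :: todo, T =>
    if T.contains a then grow next k todo T else grow next k (next a ++ todo) (T.insert a)
  | _, _, T => T

/-- Whether every number in the tree satisfies `p`. -/
def all (p : ℕ → Bool) : SearchTree → Bool
  | leaf => true
  | node l a r => l.all p && p a && r.all p

theorem of_all_of_contains {p : ℕ → Bool} {a : ℕ} {T : SearchTree} (hT : T.all p)
    (ha : T.contains a) : p a := by
  induction T with
  | leaf => simp [contains] at ha
  | node l b r ihl ihr =>
    simp only [all, Bool.and_eq_true] at hT
    rw [contains] at ha
    split_ifs at ha with hab hba
    · exact ihl hT.1.1 ha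
    · exact ihr hT.2 ha
    · rw [le_antisymm (not_lt.mp hba) (not_lt.mp hab)]
      exact hT.1.2

end SearchTree

end SearchTree

section Colour

/-- The permutations preserving a relation. -/
def autGroup {α : Type*} (r : α → α → Prop) : Subgroup (Perm α) where
  carrier := {p | ∀ a b, r (p a) (p b) ↔ r a b}
  one_mem' _ _ := Iff.rfl
  mul_mem' hp hq a b := (hp _ _).trans (hq a b)
  inv_mem' {p} hp a b := by
    rw [← hp, show p (p⁻¹ a) = a from p.apply_symm_apply a,
      show p (p⁻¹ b) = b from p.apply_symm_apply b]

/-- The table of the colouring obtained from the colouring `c` by adding to the colour of each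
vertex the cubes of the colours of its neighbours in the graph `r`, modulo `b`. -/
def refinement (b n : ℕ) (r : ℕ → ℕ → Bool) (c : ℕ) : ℕ :=
  tabulate b (fun i ↦ entry b c i +
    (((List.range n).filter (r i)).map fun j ↦ entry b c j ^ 3).sum) n

variable {b n : ℕ}

theorem sum_map_filter_range (P : ℕ → Bool) (f : ℕ → ℕ) :
    (((List.range n).filter P).map f).sum = ∑ j : Fin n, if P j then f j else 0 := by
  rw [← Finset.sum_range fun j ↦ if P j then f j else 0]
  induction n with
  | zero => rfl
  | succ n ih =>
    rw [List.range_succ, Finset.sum_range_succ, ← ih]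
    cases h : P n <;> simp [h]

variable {r : ℕ → ℕ → Bool}

theorem entry_refinement_apply (hb : 0 < b) {p : Perm (Fin n)}
    (hp : p ∈ autGroup fun i j : Fin n ↦ r i j) {c : ℕ}
    (hc : ∀ i, entry b c (p i) = entry b c i) (i : Fin n) :
    entry b (refinement b n r c) (p i) = entry b (refinement b n r c) i := by
  rw [refinement, entry_tabulate _ hb (p i).isLt, entry_tabulate _ hb i.isLt, hc,
    sum_map_filter_range, sum_map_filter_range, ← Equiv.sum_comp p]
  simp only [hp i, hc]

theorem entry_refinement_iterate_apply (hb : 0 < b) {p : Perm (Fin n)}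
    (hp : p ∈ autGroup fun i j : Fin n ↦ r i j) {c : ℕ}
    (hc : ∀ i, entry b c (p i) = entry b c i) (k : ℕ) (i : Fin n) :
    entry b ((refinement b n r)^[k] c) (p i) = entry b ((refinement b n r)^[k] c) i := by
  induction k generalizing c with
  | zero => exact hc i
  | succ _ ih => exact ih (entry_refinement_apply hb hp hc)

/-- The table of the colouring obtained by numbering the points of `B` in order, giving all other
points the same colour, and refining `k` times. -/
def colouring (b : ℕ) {n : ℕ} (r : ℕ → ℕ → Bool) (B : List (Fin n)) (k : ℕ) : ℕ :=
  (refinement b n r)^[k] (tabulate b (B.map Fin.val).idxOf n)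

theorem idxOf_map_apply {α β : Type*} [DecidableEq β] {f : α → β} (hf : f.Injective) {p : Perm α}
    {B : List α} (hp : ∀ a ∈ B, p a = a) (a : α) :
    (B.map f).idxOf (f (p a)) = (B.map f).idxOf (f a) := by
  by_cases ha : a ∈ B
  · rw [hp a ha]
  · have hpa : p a ∉ B := fun h ↦ ha (p.injective (hp _ h) ▸ h)
    rw [List.idxOf_eq_length (by rwa [List.mem_map_of_injective hf]),
      List.idxOf_eq_length (by rwa [List.mem_map_of_injective hf])]

theorem entry_colouring_apply (hb : 0 < b) {B : List (Fin n)} {p : Perm (Fin n)}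
    (hp : p ∈ pointStabilizer (autGroup fun i j : Fin n ↦ r i j) B) (k : ℕ) (i : Fin n) :
    entry b (colouring b r B k) (p i) = entry b (colouring b r B k) i := by
  obtain ⟨hp_aut, hp_fix⟩ := mem_pointStabilizer.mp hp
  refine entry_refinement_iterate_apply hb hp_aut (fun i ↦ ?_) k i
  rw [entry_tabulate _ hb (p i).isLt, entry_tabulate _ hb i.isLt,
    idxOf_map_apply Fin.val_injective hp_fix]

theorem orbit_eq_setOf_entry_colouring (hb : 0 < b) {H : Subgroup (Perm (Fin n))}
    (hH : H ≤ autGroup fun i j : Fin n ↦ r i j) {B : List (Fin n)} {T : List ℕ}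
    (hT : ∀ t ∈ T, ∃ p ∈ pointStabilizer H B, Encodes t p) {a : Fin n} {k m : ℕ}
    (hreach : ∀ i : Fin n, entry b (colouring b r B k) i = entry b (colouring b r B k) a →
      entry 2 (reach n T a m) i = 1) :
    orbit (pointStabilizer H B) a =
      {i : Fin n | entry b (colouring b r B k) i = entry b (colouring b r B k) a} := by
  ext i
  constructor
  · rintro ⟨⟨p, hp⟩, rfl⟩
    exact entry_colouring_apply hb (inf_le_inf_right _ hH hp) k a
  · intro hi
    obtain ⟨p, hp, hpi⟩ := exists_apply_eq_of_reach hT a m i (hreach i hi)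
    exact mem_orbit_symm.mp ⟨⟨p, hp⟩, hpi⟩

end Colour

section Data

/-- Names of the two given permutations, the letters of words for elements of the group. -/
inductive Generator
  | X
  | Y

/-- The permutation named by a letter. -/
def gen : Generator → Perm (Fin 100)
  | .X => x
  | .Y => y

/-- The images of `0, …, 99` under `x`. -/
def xImages : List ℕ :=
  [51, 23, 36, 15, 80, 75, 3, 32, 7, 76, 50, 28, 72, 21, 41, 46, 47, 42, 63, 20,
   18, 96, 99, 53, 59, 68, 35, 69, 74, 43, 92, 56, 60, 82, 10, 25, 29, 52, 24, 89,
   87, 40, 45, 2, 98, 79, 6, 5, 27, 34, 49, 9, 12, 86, 95, 65, 93, 78, 31, 77,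
   8, 55, 54, 19, 44, 94, 90, 64, 26, 73, 91, 81, 37, 48, 84, 16, 0, 38, 83, 17,
   71, 4, 30, 97, 11, 62, 1, 14, 13, 22, 70, 66, 33, 58, 61, 85, 88, 57, 67, 39]

/-- The images of `0, …, 99` under `y`. -/
def yImages : List ℕ :=
  [33, 75, 43, 18, 81, 71, 41, 42, 60, 97, 65, 44, 29, 61, 87, 1, 86, 72, 0, 63,
   83, 31, 37, 3, 17, 92, 58, 48, 30, 94, 40, 68, 53, 35, 49, 26, 99, 79, 77, 2,
   46, 14, 38, 52, 64, 8, 80, 16, 73, 50, 10, 20, 89, 23, 62, 88, 13, 51, 32, 4,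
   93, 36, 85, 6, 25, 55, 95, 98, 67, 28, 45, 15, 96, 21, 27, 5, 9, 59, 57, 90,
   24, 47, 76, 78, 74, 91, 7, 82, 12, 39, 66, 22, 11, 56, 34, 54, 69, 19, 84, 70]

/-- The table of images of the permutation named by a letter. -/
def genTable : Generator → ℕ
  | .X => tabulate 100 (xImages.getD · 0) 100
  | .Y => tabulate 100 (yImages.getD · 0) 100

/-- Words in the two generators. -/
abbrev Word : Type := FreeMagma Generator

/-- The element expressed by a word. -/
def perm : Word →ₙ* Perm (Fin 100) := FreeMagma.lift gen

/-- The table of images of the element expressed by a word. -/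
def table : Word → ℕ := wordTable 100 genTable

/-- The neighbours of each vertex of the Higman–Sims graph, as the binary digits of a numeral. -/
def adjacencyRows : List ℕ :=
  [198147777805927316781525404160, 4951767683425808588969360928, 29657648241472917112885248,
   238927943306424737845674509984, 510979249866330808662875442176, 336904666427582458131290554378,
   643743337057043718827233349376, 639570145160607989002746812424, 6363993888914127088536526912,
   20136341876307236250740605003, 42324531905583302990193098842, 1281273088643862165551317203,
   191965784910213980632010227846, 179200369428883291782540050690, 11228541106756666539301675648,
   5880348888824464192259100769, 337031593715601188764485157056, 635083489719398686670160176128,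
   165266292530321999899954578948, 636309341624868420040102527281, 2491634861649969716108853904,
   82941985291496346453652021493, 951407090676901430203858818816, 859060462742519094139945472,
   316923079996111874485582308481, 39846353214369882895824824332, 79266867191371524843298508912,
   248845300160283736368576299010, 10893619817191236205482265, 39923679678617097098769203330,
   29829342798787093362833129736, 2430476131973485442416664, 101690008965647525064930019328,
   515293901403368612685048053958, 160393783318909180693714042976, 949049597729035880055181384,
   250765069937779637887969725220, 186949801416312027435570823232, 20122953093342059330675934597,
   961572352832206607684845175055, 428375610626895395360023642499, 198148761009343516059884388610,
   20053832681589751203829778432, 649957678487705138245500216357, 653054512053777101658903282208,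
   557711935612878602790015877186, 17350848982533921209841688585, 77693473299897241623863388,
   10648427081280802754679996426, 21094700182350737105853383808, 675955458353800118161647976734,
   101163007088742705265003462726, 22988937336502512707826616584, 79387845204816986467329064983,
   24797883939342120345491489792, 79886505269718303044296332577, 635226454602286702897173398036,
   158482775607336871125351252992, 344963514639148579806398005325, 490226683592449941671107494400,
   634758760937943303677856992292, 44760596531551318529823937024, 997934414206001650715731175940,
   26153989727213061472609370113, 205498201252736866900393543712, 10220452500685632673031782561,
   396315507094246656249271955521, 638348686144048387200324272131, 990548632989723764210363842562,
   673748867562696191013310175520, 406083023999743270580679911044, 644062842882463520545764016130,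
   635072941188202268556760449042, 42207118535657340509433897184, 517463174746389960723269714816,
   574404190221106307944428915972, 963146515911018576515470501896, 79228248016509243951039910672,
   396924208308511652848274643456, 34971834960699905433339037708, 89209073120854535601055344672,
   79257195965602552420789468160, 361517179644587496807977201736, 203334451963527357963875401828,
   39732634128006519606973957044, 158789999477867170669841614848, 956019756521808516022100055041,
   168669633117109252612304143776, 83223060874706342015035089424, 39614383637645296042523271312,
   356836221203249570622688614664, 309589072810335213689771008, 79320645374935304285041492370,
   39770716287881180192371134544, 673440023622625480893026873904, 110829512683998758185734243329,
   678704745696208719209509683208, 634028456339375110514991706137, 1320583007738515246874165296,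
   257568983104083369747743899840]

/-- The adjacency matrix of the Higman–Sims graph, whose entry `(i, j)` is the binary digit
`100 * i + j`. -/
def adjacency : ℕ := tabulate (2 ^ 100) (adjacencyRows.getD · 0) 100

/-- Adjacency in the Higman–Sims graph. -/
def adj (i j : ℕ) : Bool := entry 2 adjacency (100 * i + j) = 1

/-- The word for `x`. -/
def X : Word := .of .X

/-- The word for `y`. -/
def Y : Word := .of .Y

/-- A word for `x⁻¹`. -/
def Xinv : Word := X * X * X

/-- A word for `y⁻¹`. -/
def Yinv : Word := Y * Y * Y * (Y * Y * Y) * (Y * Y * Y)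

/-- With `Y` and `s₂`, generates the even elements. -/
def s₁ : Word := X * X

/-- With `Y` and `s₁`, generates the even elements. -/
def s₂ : Word := X * Y * Xinv

/-- An even element fixing `0`. -/
def s₃ : Word := s₁ * s₂ * s₂ * Y * Y * s₁ * s₂

/-- An even element fixing `0`. -/
def s₄ : Word := s₁ * Y * s₁ * Y * s₁ * Y * Y * s₁ * s₂

/-- An even element fixing `9` and `0`. -/
def s₅ : Word := s₄ * s₄ * s₄ * s₃ * s₃ * s₄ * s₃ * s₄ * s₃

/-- An even element fixing `9` and `0`. -/
def s₆ : Word := s₄ * s₄ * s₃ * s₃ * s₃ * s₄ * s₄ * s₄ * s₄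

/-- An even element fixing `11`, `9` and `0`. -/
def s₇ : Word := s₅ * s₅ * s₅ * s₆ * s₆ * s₅ * s₅ * s₆

/-- An even element fixing `11`, `9` and `0`. -/
def s₈ : Word := s₅ * s₅ * s₆ * s₅ * s₆ * s₆ * s₅ * s₅ * s₅

/-- An even element fixing `11`, `9` and `0`. -/
def s₉ : Word := s₆ * s₅ * s₅ * s₆ * s₆ * s₅ * s₅ * s₆ * s₅

/-- An even element fixing `15`, `11`, `9` and `0`. -/
def s₁₀ : Word := s₈ * s₇ * s₉ * s₇ * s₈ * s₈ * s₇ * s₈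

/-- An even element fixing `15`, `11`, `9` and `0`. -/
def s₁₁ : Word := s₈ * s₇ * s₇ * s₈ * s₉ * s₇ * s₉

/-- An even element fixing `15`, `11`, `9` and `0`. -/
def s₁₂ : Word := s₈ * s₇ * s₉ * s₇ * s₇ * s₈

/-- An element fixing `19`, `15`, `11`, `9` and `0`. -/
def g₀ : Word := s₁₂ * s₁₀ * s₁₂ * s₆ * s₆ * s₂ * s₁ * s₂ * s₁ * X * Y * Y * Y

/-- An element fixing `19`, `15`, `11`, `9` and `0`. -/
def g₁ : Word := s₁₂ * s₁₁ * s₇ * s₈ * s₈ * s₅ * s₅ * s₅ * s₆ * s₆ * s₅ * s₃ * s₄ * s₃ * s₁ * Y *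
  s₁ * X

/-- Conjugates `x` to `x ^ 3`. -/
def cubeX : Word := Y * Y * Y * Xinv * Y * Xinv * Yinv * Yinv * X * Yinv * Yinv * X * Yinv *
  Yinv * X * Yinv * X * Y * Y * Xinv * Y * Y * Y

/-- Conjugates `y` to `y ^ 3`. -/
def cubeY : Word := Xinv * Xinv * Yinv * Yinv * X * Yinv * Yinv * Xinv * Xinv * Yinv * X * Yinv *
  Yinv * X * Yinv * Yinv * Yinv * X * Yinv * X * Yinv * Yinv * X * Yinv * Yinv * Yinv * X

/-- Commutes with `y`. -/
def c₁ : Word := Xinv * Y * Xinv * Y * Y * Xinv * Yinv * Yinv * X * Yinv * X * Yinv * Yinv * X *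
  Yinv * X * Yinv * X * Y * Y * Y * Xinv * Y * Xinv

/-- Commutes with `y`. -/
def c₂ : Word := X * Yinv * X * Yinv * Yinv * Xinv * Y * Xinv * Y * Y * Xinv * Y * Xinv * Y *
  Xinv * Y * Y * Xinv * Y * Y * Xinv * Y * Y * Xinv * Y * Xinv * Y * X * X

/-- The elements `y ^ a * c₁ ^ b * c₂ ^ c` of the centralizer of `y`. -/
def centralizerWords : List Word :=
  (List.iterate (Y * ·) Y 10).flatMap fun v ↦ [v, v * c₁, v * c₂, v * c₁ * c₂]

/-- An element of order 11 whose product with `y` has order 11. -/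
def u₁ : Word := s₁ * Y * Y * Y * s₁ * Y * Y

/-- An element of order 11 whose product with `x * x` has order 11. -/
def u₂ : Word := Y * Y * s₁ * Y

/-- A set of points invariant under `y`, as the binary digits of a numeral. It obstructs the
generation of the group by `y` and `q * y⁻¹` for some conjugates `q` of `x * y`. -/
def yInvariantSet : ℕ := 5580743973508777919017682982

/-- The tables of the conjugates under `x` and `y` of the permutation with table `t`. -/
def conjugates (t : ℕ) : List ℕ :=
  [sandwichTable 100 (table X) t (table Xinv), sandwichTable 100 (table Y) t (table Yinv)]

/-- The tables of the `1100` conjugates of `x * y`. Besides the first candidate, each of them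
contributes two further candidates. -/
def classTree : SearchTree :=
  .grow conjugates 2201 [table (X * Y)] .leaf

end Data

section Group

/-- The group generated by the two given permutations; it is isomorphic to `Aut(HS)`. -/
abbrev G : Subgroup (Perm (Fin 100)) := Subgroup.closure {x, y}

/-- The subgroup of even elements of `G`; it is isomorphic to the Higman–Sims group `HS`. -/
def S : Subgroup (Perm (Fin 100)) := G ⊓ alternatingGroup (Fin 100)

theorem S_le_G : S ≤ G := inf_le_left

theorem encodes_perm (w : Word) : Encodes (table w) (perm w) := by
  refine encodes_wordTable (fun a ↦ ?_) w
  cases a <;> · unfold Encodes; decide +kernel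

theorem perm_mem_G (w : Word) : perm w ∈ G := by
  refine lift_mem (fun a ↦ ?_) w
  cases a <;> exact Subgroup.subset_closure (by simp [gen])

theorem perm_eq_of_table_eq {v w : Word} (h : table v = table w) : perm v = perm w :=
  (encodes_perm v).unique (h ▸ encodes_perm w)

theorem adj_genTable (a : Generator) (i j : Fin 100) :
    adj (entry 100 (genTable a) i) (entry 100 (genTable a) j) = adj i j := by
  cases a <;> · revert i j; decide +kernel

theorem G_le_autGroup : G ≤ autGroup fun i j : Fin 100 ↦ adj i j := by
  refine (Subgroup.closure_le _).mpr ?_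
  suffices ∀ a : Generator, gen a ∈ autGroup fun i j : Fin 100 ↦ adj i j by
    rintro _ (rfl | rfl)
    exacts [this .X, this .Y]
  intro a i j
  have hi : (gen a i : ℕ) = entry 100 (genTable a) i := encodes_perm (.of a) i
  have hj : (gen a j : ℕ) = entry 100 (genTable a) j := encodes_perm (.of a) j
  beta_reduce
  rw [hi, hj, adj_genTable]

end Group

section Parity

theorem cycleType_x : x.cycleType = Multiset.replicate 25 4 :=
  (cycleType_permOfCycles (by decide +kernel) (by decide +kernel)).trans (by decide +kernel)

theorem cycleType_y : y.cycleType = Multiset.replicate 8 10 + Multiset.replicate 4 5 :=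
  (cycleType_permOfCycles (by decide +kernel) (by decide +kernel)).trans (by decide +kernel)

theorem sign_x : Perm.sign x = -1 := by
  rw [Perm.sign_of_cycleType, cycleType_x]
  decide

theorem sign_y : Perm.sign y = 1 := by
  rw [Perm.sign_of_cycleType, cycleType_y]
  decide

/-- Whether the letter `X`, which names an odd permutation, occurs an even number of times. -/
def isEven : Word → Bool
  | .of .X => false
  | .of .Y => true
  | .mul v w => isEven v == isEven w

theorem sign_perm (w : Word) : Perm.sign (perm w) = if isEven w then 1 else -1 := by
  induction w using FreeMagma.recOnMul with
  | ih1 a => cases a; exacts [sign_x, sign_y]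
  | ih2 v w hv hw =>
    rw [map_mul, map_mul, hv, hw]
    change _ = if isEven v == isEven w then _ else _
    cases isEven v <;> cases isEven w <;> simp

theorem perm_mem_S {w : Word} (hw : isEven w) : perm w ∈ S :=
  ⟨perm_mem_G w, Perm.mem_alternatingGroup.mpr (by rw [sign_perm, if_pos hw])⟩

end Parity

section Orbits

/-- A colour of the point `i` that is invariant under the automorphisms of the Higman–Sims graph
fixing the points of `B`. Four refinements modulo `2 ^ 32` suffice to separate all orbits needed. -/
def colour (B : List (Fin 100)) (i : Fin 100) : ℕ :=
  entry (2 ^ 32) (colouring (2 ^ 32) adj B 4) i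

/-- A checkable condition under which the orbit of `a` under the common stabilizer of `B` consists
of the `d` points with the colour of `a`: the elements expressed by `W` fix `B`, and every such
point is carried to `a` by a product of at most `10` of them. -/
abbrev OrbitCertificate (B : List (Fin 100)) (W : List Word) (a : Fin 100) (d : ℕ) : Prop :=
  (∀ w ∈ W, ∀ b ∈ B, entry 100 (table w) b = b) ∧
  (∀ i, colour B i = colour B a → entry 2 (reach 100 (W.map table) a 10) i = 1) ∧
  (Finset.univ.filter fun i ↦ colour B i = colour B a).card = d

variable {H : Subgroup (Perm (Fin 100))} {B : List (Fin 100)} {W : List Word} {a : Fin 100} {d : ℕ}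

theorem OrbitCertificate.orbit_eq (h : OrbitCertificate B W a d) (hHG : H ≤ G)
    (hW : ∀ w ∈ W, perm w ∈ H) :
    orbit (pointStabilizer H B) a = {i | colour B i = colour B a} := by
  refine orbit_eq_setOf_entry_colouring (by norm_num) (hHG.trans G_le_autGroup) ?_ h.2.1
  intro t ht
  obtain ⟨w, hw, rfl⟩ := List.mem_map.mp ht
  exact ⟨perm w, mem_pointStabilizer.mpr ⟨hW w hw, fun b hb ↦
    Fin.ext ((encodes_perm w b).trans (h.1 w hw b hb))⟩, encodes_perm w⟩

theorem OrbitCertificate.ncard_orbit (h : OrbitCertificate B W a d) (hHG : H ≤ G)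
    (hW : ∀ w ∈ W, perm w ∈ H) : (orbit (pointStabilizer H B) a).ncard = d := by
  rw [h.orbit_eq hHG hW, Set.ncard_eq_toFinset_card', Set.toFinset_ofPred, h.2.2]

theorem orbitCertificate_nil : OrbitCertificate [] [Y, s₁, s₂] 0 100 := by decide +kernel

theorem orbitCertificate_0_9 : OrbitCertificate [0] [s₃, s₄] 9 22 := by decide +kernel

theorem orbitCertificate_0_1 : OrbitCertificate [0] [s₃, s₄] 1 77 := by decide +kernel

theorem orbitCertificate_9_0_11 : OrbitCertificate [9, 0] [s₅, s₆] 11 21 := by decide +kernel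

theorem orbitCertificate_11_9_0_15 : OrbitCertificate [11, 9, 0] [s₇, s₈, s₉] 15 20 := by
  decide +kernel

theorem orbitCertificate_15_11_9_0_19 :
    OrbitCertificate [15, 11, 9, 0] [s₁₀, s₁₁, s₁₂] 19 16 := by
  decide +kernel

theorem orbitCertificate_19_15_11_9_0_24 :
    OrbitCertificate [19, 15, 11, 9, 0] [g₀, g₁] 24 6 := by
  decide +kernel

theorem isEven_stabilizer_words :
    ∀ w ∈ [Y, s₁, s₂, s₃, s₄, s₅, s₆], isEven w := by
  decide +kernel

theorem colour_injective : Function.Injective (colour [24, 19, 15, 11, 9, 0]) := by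
  decide +kernel

end Orbits

section Structure

theorem eq_one_of_mem_pointStabilizer_base {p : Perm (Fin 100)}
    (hp : p ∈ pointStabilizer G [24, 19, 15, 11, 9, 0]) : p = 1 :=
  Equiv.ext fun i ↦ colour_injective <|
    entry_colouring_apply (by norm_num) (inf_le_inf_right _ G_le_autGroup hp) 4 i

theorem card_G : Nat.card G = 88704000 := by
  have htrivial : pointStabilizer G [24, 19, 15, 11, 9, 0] = ⊥ :=
    (Subgroup.eq_bot_iff_forall _).mpr fun _ ↦ eq_one_of_mem_pointStabilizer_base
  have hG {W : List Word} : ∀ w ∈ W, perm w ∈ G := fun w _ ↦ perm_mem_G w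
  rw [← pointStabilizer_nil G,
    card_pointStabilizer_eq_ncard_orbit_mul G [] 0, orbitCertificate_nil.ncard_orbit le_rfl hG,
    card_pointStabilizer_eq_ncard_orbit_mul G [0] 9, orbitCertificate_0_9.ncard_orbit le_rfl hG,
    card_pointStabilizer_eq_ncard_orbit_mul G [9, 0] 11,
    orbitCertificate_9_0_11.ncard_orbit le_rfl hG,
    card_pointStabilizer_eq_ncard_orbit_mul G [11, 9, 0] 15,
    orbitCertificate_11_9_0_15.ncard_orbit le_rfl hG,
    card_pointStabilizer_eq_ncard_orbit_mul G [15, 11, 9, 0] 19,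
    orbitCertificate_15_11_9_0_19.ncard_orbit le_rfl hG,
    card_pointStabilizer_eq_ncard_orbit_mul G [19, 15, 11, 9, 0] 24,
    orbitCertificate_19_15_11_9_0_24.ncard_orbit le_rfl hG, htrivial, Subgroup.card_bot]

theorem perm_mem_of_S_le {H : Subgroup (Perm (Fin 100))} (hS : S ≤ H) {w : Word}
    (hw : w ∈ [Y, s₁, s₂, s₃, s₄, s₅, s₆]) : perm w ∈ H :=
  hS (perm_mem_S (isEven_stabilizer_words w hw))

variable {H : Subgroup (Perm (Fin 100))}

theorem isPretransitive_of_S_le (hS : S ≤ H) (hG : H ≤ G) : IsPretransitive H (Fin 100) := by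
  have hcard := orbitCertificate_nil.ncard_orbit hG fun w hw ↦ perm_mem_of_S_le hS (by grind)
  rw [pointStabilizer_nil] at hcard
  rw [isPretransitive_iff_orbit_eq_univ (0 : Fin 100)]
  exact Set.eq_of_subset_of_ncard_le (Set.subset_univ _) (by simp [hcard])

theorem ncard_orbit_stabilizer_zero_nine (hS : S ≤ H) (hG : H ≤ G) :
    (orbit (stabilizer H (0 : Fin 100)) (9 : Fin 100)).ncard = 22 := by
  rw [← orbit_pointStabilizer_singleton]
  exact orbitCertificate_0_9.ncard_orbit hG fun w hw ↦ perm_mem_of_S_le hS (by grind)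

theorem ncard_orbit_stabilizer_zero_one (hS : S ≤ H) (hG : H ≤ G) :
    (orbit (stabilizer H (0 : Fin 100)) (1 : Fin 100)).ncard = 77 := by
  rw [← orbit_pointStabilizer_singleton]
  exact orbitCertificate_0_1.ncard_orbit hG fun w hw ↦ perm_mem_of_S_le hS (by grind)

theorem isPreprimitive_of_S_le (hS : S ≤ H) (hG : H ≤ G) :
    MulAction.IsPreprimitive H (Fin 100) := by
  have := isPretransitive_of_S_le hS hG
  apply isPreprimitive_of_suborbits (a := (0 : Fin 100)) (b := 9) (c := 1) <;>
    norm_num [ncard_orbit_stabilizer_zero_nine hS hG, ncard_orbit_stabilizer_zero_one hS hG]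

theorem eq_one_of_commute_S {c : Perm (Fin 100)} (hc : ∀ g ∈ S, g * c = c * g) : c = 1 := by
  have := isPretransitive_of_S_le le_rfl S_le_G
  have h9 := ncard_orbit_stabilizer_zero_nine le_rfl S_le_G
  have h1 := ncard_orbit_stabilizer_zero_one le_rfl S_le_G
  refine eq_one_of_commute_of_stabilizer_fixes_only (a := 0) (fun d hd ↦ ?_) hc
  have hd_orbit : (orbit (stabilizer S (0 : Fin 100)) d).ncard = 1 := by
    refine Set.ncard_eq_one.mpr ⟨d, Set.eq_singleton_iff_unique_mem.mpr ⟨mem_orbit_self d, ?_⟩⟩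
    rintro _ ⟨⟨g, hg⟩, rfl⟩
    exact hd g hg
  obtain hd | hd | hd := eq_or_mem_suborbit (M := S) (a := (0 : Fin 100)) (b := 9) (c := 1)
    (by simp [h9]) (by simp [h1]) (by simp [h9, h1]) (by simp [h9, h1]) d
  · exact hd
  · rw [orbit_eq_iff.mpr hd, h9] at hd_orbit
    contradiction
  · rw [orbit_eq_iff.mpr hd, h1] at hd_orbit
    contradiction

end Structure

section Simple

theorem mem_orbit_stabilizer_zero_nine_iff {i : Fin 100} :
    i ∈ orbit (stabilizer S (0 : Fin 100)) (9 : Fin 100) ↔ colour [0] i = colour [0] 9 := by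
  rw [← orbit_pointStabilizer_singleton,
    orbitCertificate_0_9.orbit_eq S_le_G fun w hw ↦ perm_mem_of_S_le le_rfl (by grind)]
  rfl

theorem colour_zero_base : ∀ i ∈ [24, 19, 15, 11, 9], colour [0] i = colour [0] 9 := by
  decide +kernel

instance faithfulSMul_orbit_nine :
    FaithfulSMul (stabilizer S (0 : Fin 100))
      (orbit (stabilizer S (0 : Fin 100)) (9 : Fin 100)) := by
  refine ⟨fun {g h} hgh ↦ ?_⟩
  have hfix (i : Fin 100) (hi : i ∈ [24, 19, 15, 11, 9]) : ((h⁻¹ * g : S) : Perm (Fin 100)) i = i :=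
    inv_smul_eq_iff.mpr <| congrArg Subtype.val
      (hgh ⟨i, mem_orbit_stabilizer_zero_nine_iff.mpr (colour_zero_base i hi)⟩)
  have hone : ((h⁻¹ * g : S) : Perm (Fin 100)) = 1 := by
    refine eq_one_of_mem_pointStabilizer_base (mem_pointStabilizer.mpr
      ⟨S_le_G (h⁻¹ * g : S).2, fun i hi ↦ ?_⟩)
    obtain hi | hi := (List.mem_append (s := [24, 19, 15, 11, 9]) (t := [0])).mp hi
    · exact hfix i hi
    · obtain rfl := List.mem_singleton.mp hi
      exact (h⁻¹ * g).2
  exact Subtype.ext (inv_mul_eq_one.mp (Subtype.ext hone)).symm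

instance isPreprimitive_orbit_nine :
    MulAction.IsPreprimitive (stabilizer S (0 : Fin 100))
      (orbit (stabilizer S (0 : Fin 100)) (9 : Fin 100)) := by
  have h11 : (orbit (stabilizer (stabilizer S (0 : Fin 100)) (9 : Fin 100)) (11 : Fin 100)).ncard =
      21 := by
    rw [← orbit_pointStabilizer_pair]
    exact orbitCertificate_9_0_11.ncard_orbit S_le_G fun w hw ↦ perm_mem_of_S_le le_rfl (by grind)
  refine isPreprimitive_orbit_of_ncard (c := 11) ?_ (by simp [h11]) ?_
  · exact mem_orbit_stabilizer_zero_nine_iff.mpr (colour_zero_base 11 (by simp))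
  · rw [h11, ncard_orbit_stabilizer_zero_nine le_rfl S_le_G]

theorem twentytwo_dvd_card {N : Subgroup (stabilizer S (0 : Fin 100))} [N.Normal] (hN : N ≠ ⊥) :
    22 ∣ Nat.card N := by
  have : Nonempty (orbit (stabilizer S (0 : Fin 100)) (9 : Fin 100)) :=
    (nonempty_orbit (9 : Fin 100)).to_subtype
  rw [← ncard_orbit_stabilizer_zero_nine le_rfl S_le_G, ← Nat.card_coe_set_eq]
  exact card_dvd_card_of_normal_ne_bot hN

theorem card_ne_hundred_of_normal {N : Subgroup S} [N.Normal] : Nat.card N ≠ 100 := by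
  intro hN
  have := isPreprimitive_of_S_le le_rfl S_le_G
  have : Fact (Nat.Prime 5) := ⟨by norm_num⟩
  have hdivisors : ∀ d ∈ Nat.divisors 100, d % 5 = 1 → d = 1 := by decide +kernel
  obtain ⟨k, hk⟩ := card_dvd_prime_pow_of_normal (α := Fin 100) (N := N) 5 (by norm_num [hN])
    fun d hd hmod ↦ hdivisors d (Nat.mem_divisors.mpr ⟨hN ▸ hd, by norm_num⟩) hmod
  rw [Nat.card_fin] at hk
  have htwo : 2 ∣ 5 ^ k := (by norm_num : 2 ∣ 100).trans hk
  exact absurd (Nat.prime_two.dvd_of_dvd_pow htwo) (by norm_num)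

theorem eleven_dvd_card_of_normal {N : Subgroup S} [N.Normal] (hN : N ≠ ⊥) : 11 ∣ Nat.card N := by
  have := isPreprimitive_of_S_le le_rfl S_le_G
  by_cases hstab : N.subgroupOf (stabilizer S (0 : Fin 100)) = ⊥
  · have := isPretransitive_of_normal_ne_bot (α := Fin 100) hN
    have hbot : stabilizer N (0 : Fin 100) = ⊥ := by
      refine (Subgroup.eq_bot_iff_forall _).mpr fun g hg ↦ Subtype.ext ?_
      have hg_one : (⟨g, hg⟩ : stabilizer S (0 : Fin 100)) = 1 :=
        (Subgroup.eq_bot_iff_forall _).mp hstab _ g.2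
      simpa using Subtype.ext_iff.mp hg_one
    refine absurd ?_ (card_ne_hundred_of_normal (N := N))
    rw [← Subgroup.card_mul_index (stabilizer N (0 : Fin 100)), hbot, Subgroup.card_bot, one_mul,
      ← hbot, index_stabilizer_of_transitive, Nat.card_fin]
  · exact ((by norm_num : 11 ∣ 22).trans (twentytwo_dvd_card hstab)).trans
      (Subgroup.card_comap_dvd_of_injective N _ (Subgroup.subtype_injective _))

theorem orderOf_x : orderOf x = 4 := by
  rw [← Perm.lcm_cycleType, cycleType_x]
  decide

theorem orderOf_y : orderOf y = 10 := by
  rw [← Perm.lcm_cycleType, cycleType_y]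
  decide

theorem perm_X : perm X = x := rfl

theorem perm_Y : perm Y = y := rfl

theorem perm_Xinv : perm Xinv = x⁻¹ := by
  rw [eq_inv_iff_mul_eq_one, ← pow_orderOf_eq_one x, orderOf_x]
  simp only [Xinv, map_mul, perm_X, pow_succ, pow_zero, one_mul, mul_assoc]

theorem perm_Yinv : perm Yinv = y⁻¹ := by
  rw [eq_inv_iff_mul_eq_one, ← pow_orderOf_eq_one y, orderOf_y]
  simp only [Yinv, map_mul, perm_Y, pow_succ, pow_zero, one_mul, mul_assoc]

theorem exists_pow_eleven_table :
    ∀ v ∈ [Y, s₁, s₂], isEven v ∧ ∃ u ∈ [u₁, u₂, X * u₁ * Xinv], isEven u ∧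
      (∀ i < 100, (entry 100 (table u))^[11] i = i) ∧
      ∀ i < 100, (entry 100 (table (v * u)))^[11] i = i := by
  decide +kernel

theorem perm_mem_map_of_normal {N : Subgroup S} [N.Normal] (hN : N ≠ ⊥) {v : Word}
    (hv : v ∈ [Y, s₁, s₂]) : perm v ∈ N.map S.subtype := by
  obtain ⟨hv, u, -, hu, hu_pow, hvu_pow⟩ := exists_pow_eleven_table v hv
  have hcard : ¬ 11 ^ 2 ∣ Nat.card S := fun h ↦
    absurd (h.trans (Subgroup.card_dvd_of_le S_le_G)) (by rw [card_G]; norm_num)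
  refine ⟨⟨perm v, perm_mem_S hv⟩, ?_, rfl⟩
  refine mem_normal_of_mul_pow_prime_eq_one (u := ⟨perm u, perm_mem_S hu⟩) (p := 11) (by norm_num)
    (eleven_dvd_card_of_normal hN) hcard ?_ ?_
  · exact Subtype.ext ((encodes_perm u).pow_eq_one hu_pow)
  · exact Subtype.ext ((encodes_perm (v * u)).pow_eq_one hvu_pow)

theorem S_le_map_of_normal {N : Subgroup S} [N.Normal] (hN : N ≠ ⊥) : S ≤ N.map S.subtype := by
  intro g hg
  have hy : y ∈ N.map S.subtype := perm_mem_map_of_normal hN (v := Y) (by simp)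
  have hxx : x * x ∈ N.map S.subtype := perm_mem_map_of_normal hN (v := s₁) (by simp)
  have hxyx : x * y * x⁻¹ ∈ N.map S.subtype := by
    rw [← perm_Xinv]
    exact perm_mem_map_of_normal hN (v := s₂) (by simp)
  refine (mem_or_mul_mem_of_mem_closure hxx hy hxyx hg.1).resolve_right fun hxg ↦ ?_
  have hsign : Perm.sign (x * g) = 1 :=
    Perm.mem_alternatingGroup.mp (Subgroup.map_subtype_le N hxg).2
  rw [map_mul, sign_x, Perm.mem_alternatingGroup.mp hg.2] at hsign
  exact absurd hsign (by decide)

theorem exists_mul_ne_mul_S : ∃ a b : S, a * b ≠ b * a := by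
  refine ⟨⟨perm Y, perm_mem_S (by decide)⟩, ⟨perm s₁, perm_mem_S (by decide)⟩, fun h ↦ ?_⟩
  have hcomm : perm (Y * s₁) = perm (s₁ * Y) := by
    simpa only [map_mul, Subgroup.coe_mul] using Subtype.ext_iff.mp h
  have hentry : entry 100 (table (Y * s₁)) (0 : Fin 100) =
      entry 100 (table (s₁ * Y)) (0 : Fin 100) := by
    rw [← encodes_perm, ← encodes_perm, hcomm]
  exact absurd hentry (by decide +kernel)

theorem isSimpleGroup_S : IsSimpleGroup S where
  exists_pair_ne := by
    obtain ⟨a, b, hab⟩ := exists_mul_ne_mul_S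
    exact ⟨_, _, hab⟩
  eq_bot_or_eq_top_of_normal N _ := or_iff_not_imp_left.mpr fun hN ↦ by
    rw [← (Subgroup.map_injective S.subtype_injective).eq_iff]
    refine le_antisymm (Subgroup.map_mono le_top) ?_
    rw [← MonoidHom.range_eq_map, Subgroup.range_subtype]
    exact S_le_map_of_normal hN

theorem isAlmostSimple_G :
    ∃ K : Subgroup G, K.Normal ∧ IsSimpleGroup K ∧ (∃ a b : K, a * b ≠ b * a) ∧
      Subgroup.centralizer (K : Set G) = ⊥ := by
  let e : S.subgroupOf G ≃* S := Subgroup.subgroupOfEquivOfLe S_le_G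
  have := isSimpleGroup_S
  refine ⟨S.subgroupOf G, ?_, e.isSimpleGroup, ?_, ?_⟩
  · rw [S, Subgroup.inf_subgroupOf_left]
    infer_instance
  · obtain ⟨a, b, hab⟩ := exists_mul_ne_mul_S
    exact ⟨e.symm a, e.symm b, fun h ↦ hab (e.symm.injective (by simpa using h))⟩
  · refine (Subgroup.eq_bot_iff_forall _).mpr fun c hc ↦ Subtype.ext (eq_one_of_commute_S ?_)
    intro g hg
    exact congrArg Subtype.val (Subgroup.mem_centralizer_iff.mp hc ⟨g, S_le_G hg⟩ hg)

end Simple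

section Triple

theorem perm_X_mul_Y : perm (X * Y) = x * y := by
  rw [map_mul, perm_X, perm_Y]

theorem mul_sq_eq_one : (x * y) ^ 2 = 1 := by
  rw [← perm_X_mul_Y]
  exact (encodes_perm (X * Y)).pow_eq_one (by decide +kernel)

theorem cycleType_inv_mul : ((x * y)⁻¹).cycleType = Multiset.replicate 35 2 := by
  have hsupport : (x * y).support =
      Finset.univ.filter fun i : Fin 100 ↦ entry 100 (table (X * Y)) i ≠ i := by
    ext i
    rw [Perm.mem_support, Finset.mem_filter_univ, ← encodes_perm (X * Y) i, ne_eq, ne_eq,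
      Fin.ext_iff, perm_X_mul_Y]
  have hcard :
      (Finset.univ.filter fun i : Fin 100 ↦ entry 100 (table (X * Y)) i ≠ i).card = 70 := by
    decide +kernel
  rw [Perm.cycleType_inv, cycleType_eq_replicate_of_sq_eq_one mul_sq_eq_one, hsupport, hcard]

theorem permInd_add_add : permInd x + permInd y + permInd (x * y)⁻¹ = 2 * (100 - 1) := by
  rw [permInd, permInd, permInd, cycleType_x, cycleType_y, cycleType_inv_mul]
  decide

theorem conj_eq_of_table_eq {g h w : Word} (hw : table (h * g) = table (w * h)) :
    perm h * perm g * (perm h)⁻¹ = perm w :=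
  mul_inv_eq_of_eq_mul (by simpa only [map_mul] using perm_eq_of_table_eq hw)

theorem isRational_x {k : ℤ} (hk : Int.gcd k (orderOf x) = 1) : ∃ h ∈ G, h * x * h⁻¹ = x ^ k := by
  have hconj : perm cubeX * x * (perm cubeX)⁻¹ = x ^ 3 := by
    have := conj_eq_of_table_eq (g := X) (h := cubeX) (w := X * X * X) (by decide +kernel)
    simpa only [map_mul, perm_X, pow_succ, pow_zero, one_mul] using this
  exact exists_conj_eq_zpow_of_conj_eq_pow (perm_mem_G cubeX) orderOf_x (by norm_num) hconj
    (by decide) hk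

theorem isRational_y {k : ℤ} (hk : Int.gcd k (orderOf y) = 1) : ∃ h ∈ G, h * y * h⁻¹ = y ^ k := by
  have hconj : perm cubeY * y * (perm cubeY)⁻¹ = y ^ 3 := by
    have := conj_eq_of_table_eq (g := Y) (h := cubeY) (w := Y * Y * Y) (by decide +kernel)
    simpa only [map_mul, perm_Y, pow_succ, pow_zero, one_mul] using this
  exact exists_conj_eq_zpow_of_conj_eq_pow (perm_mem_G cubeY) orderOf_y (by norm_num) hconj
    (by decide) hk

theorem isRational_inv_mul {k : ℤ} (hk : Int.gcd k (orderOf (x * y)⁻¹) = 1) :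
    ∃ h ∈ G, h * (x * y)⁻¹ * h⁻¹ = (x * y)⁻¹ ^ k := by
  have horder : orderOf (x * y)⁻¹ = 2 := by
    rw [← Perm.lcm_cycleType, cycleType_inv_mul]
    decide
  exact exists_conj_eq_zpow_of_conj_eq_pow (a := 1) G.one_mem horder (by norm_num) (by simp)
    (by decide) hk

end Triple

section Rigidity

/-- The values of `q * y⁻¹`, where `q` is the permutation with table `t`. -/
def mulYinv (t i : ℕ) : ℕ := entry 100 t (entry 100 (table Yinv) i)

/-- `q * y⁻¹`, where `q` is the permutation with table `t`, is visibly not conjugate to `x`, whose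
cycles all have length `4`. -/
abbrev HasWrongCycle (t : ℕ) : Prop :=
  ∃ i < 100, (mulYinv t)^[2] i = i ∨ (mulYinv t)^[4] i ≠ i

/-- `q * y⁻¹`, where `q` is the permutation with table `t`, preserves `yInvariantSet`. -/
abbrev PreservesYInvariantSet (t : ℕ) : Prop :=
  ∀ i < 100, entry 2 yInvariantSet (mulYinv t i) = entry 2 yInvariantSet i

/-- The permutation with table `t` is the conjugate of `x * y` by one of the `centralizerWords`. -/
abbrev IsCentralizerConj (t : ℕ) : Prop :=
  ∃ w ∈ centralizerWords, ∀ i < 100,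
    entry 100 t (entry 100 (table w) i) = entry 100 (table w) (entry 100 (table (X * Y)) i)

theorem classTree_spec : classTree.contains (table (X * Y)) ∧ classTree.all fun t ↦
    (∀ t' ∈ conjugates t, classTree.contains t') ∧
      (HasWrongCycle t ∨ PreservesYInvariantSet t ∨ IsCentralizerConj t) := by
  decide +kernel

theorem exists_classTree_encodes {g : Perm (Fin 100)} (hg : g ∈ G) :
    ∃ t, classTree.contains t ∧ Encodes t (g * (x * y) * g⁻¹) := by
  refine conj_mem_of_mem_closure (C := {p | ∃ t, classTree.contains t ∧ Encodes t p})
    ?_ ⟨_, classTree_spec.1, perm_X_mul_Y ▸ encodes_perm (X * Y)⟩ hg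
  rintro a ha p ⟨t, ht, hp⟩
  obtain ⟨hclosed, -⟩ := of_decide_eq_true (SearchTree.of_all_of_contains classTree_spec.2 ht)
  obtain rfl | rfl := ha
  · refine ⟨_, hclosed (sandwichTable 100 (table X) t (table Xinv)) (by simp [conjugates]), ?_⟩
    rw [← perm_Xinv, ← perm_X]
    exact (encodes_perm X).sandwich hp (encodes_perm Xinv)
  · refine ⟨_, hclosed (sandwichTable 100 (table Y) t (table Yinv)) (by simp [conjugates]), ?_⟩
    rw [← perm_Yinv, ← perm_Y]
    exact (encodes_perm Y).sandwich hp (encodes_perm Yinv)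

variable {t : ℕ} {q : Perm (Fin 100)}

theorem val_mul_inv_y_apply (hq : Encodes t q) (i : Fin 100) :
    ((q * y⁻¹) i : ℕ) = mulYinv t i := by
  rw [← perm_Yinv, Perm.mul_apply, hq, encodes_perm Yinv, mulYinv]

theorem sq_x_apply_ne (i : Fin 100) : (x ^ 2) i ≠ i := by
  have htable : ∀ i : Fin 100, entry 100 (table (X * X)) i ≠ i := by decide +kernel
  rw [sq, ← perm_X, ← map_mul, ne_eq, Fin.ext_iff, encodes_perm]
  exact htable i

theorem conj_x_ne_of_hasWrongCycle (hq : Encodes t q) (ht : HasWrongCycle t) (a : Perm (Fin 100)) :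
    a * x * a⁻¹ ≠ q * y⁻¹ := by
  intro ha
  obtain ⟨i, hi, hcycle⟩ := ht
  rw [← val_pow_apply (val_mul_inv_y_apply hq) 2 ⟨i, hi⟩,
    ← val_pow_apply (val_mul_inv_y_apply hq) 4 ⟨i, hi⟩, ← ha, conj_pow, conj_pow,
    ← orderOf_x, pow_orderOf_eq_one] at hcycle
  obtain htwo | hfour := hcycle
  · refine sq_x_apply_ne (a⁻¹ ⟨i, hi⟩) (a.injective ?_)
    simpa using Fin.ext htwo
  · simp at hfour

theorem closure_ne_of_preservesYInvariantSet (hq : Encodes t q) (ht : PreservesYInvariantSet t) :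
    Subgroup.closure {q * y⁻¹, y} ≠ G := by
  have hy_table : ∀ i < 100,
      entry 2 yInvariantSet (entry 100 (table Y) i) = entry 2 yInvariantSet i := by decide +kernel
  have hx_table : ¬ ∀ i : Fin 100,
      entry 2 yInvariantSet (entry 100 (table X) i) = entry 2 yInvariantSet i := by decide +kernel
  refine fun hG ↦ hx_table fun i ↦ ?_
  have hx : x ∈ Subgroup.closure {q * y⁻¹, y} := hG ▸ Subgroup.subset_closure (by simp)
  rw [← encodes_perm, perm_X]
  refine apply_apply_eq_of_mem_closure (c := fun i : Fin 100 ↦ entry 2 yInvariantSet i) ?_ hx i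
  rintro p (rfl | rfl) j
  · rw [val_mul_inv_y_apply hq]
    exact ht j j.isLt
  · rw [← perm_Y, encodes_perm]
    exact hy_table j j.isLt

theorem exists_conj_eq_of_isCentralizerConj (hq : Encodes t q) (ht : IsCentralizerConj t) :
    ∃ c ∈ G, c * y = y * c ∧ c * (x * y) * c⁻¹ = q := by
  have hcomm : ∀ w ∈ centralizerWords, table (w * Y) = table (Y * w) := by decide +kernel
  obtain ⟨w, hw, hconj⟩ := ht
  refine ⟨perm w, perm_mem_G w, ?_, mul_inv_eq_of_eq_mul (Equiv.ext fun i ↦ Fin.ext ?_)⟩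
  · simpa only [map_mul, perm_Y] using perm_eq_of_table_eq (hcomm w hw)
  · rw [← perm_X_mul_Y, Perm.mul_apply, Perm.mul_apply, encodes_perm, encodes_perm, hq,
      encodes_perm]
    exact (hconj i i.isLt).symm

theorem isRigid {x' y' z' : Perm (Fin 100)} (hxyz' : x' * y' * z' = 1)
    (hG : Subgroup.closure {x', y'} = G) (hx : ∃ g ∈ G, g * x * g⁻¹ = x')
    (hy : ∃ g ∈ G, g * y * g⁻¹ = y') (hz : ∃ g ∈ G, g * (x * y)⁻¹ * g⁻¹ = z') :
    ∃ g ∈ G, g * x * g⁻¹ = x' ∧ g * y * g⁻¹ = y' ∧ g * (x * y)⁻¹ * g⁻¹ = z' := by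
  refine rigid_of_forall_conj (fun g hg hconj hclosure ↦ ?_) (mul_inv_cancel _) hxyz' hG hx hy hz
  have hz_inv : (x * y)⁻¹ = x * y := inv_eq_of_mul_eq_one_left (by rw [← sq, mul_sq_eq_one])
  have hx_eq : (y * (g * (x * y)⁻¹ * g⁻¹))⁻¹ = g * (x * y) * g⁻¹ * y⁻¹ := by
    group
  rw [hx_eq] at hconj hclosure
  rw [hz_inv]
  obtain ⟨t, ht, hq⟩ := exists_classTree_encodes hg
  obtain ⟨-, hcases⟩ := of_decide_eq_true (SearchTree.of_all_of_contains classTree_spec.2 ht)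
  obtain hwrong | hpreserves | hcentral := hcases
  · obtain ⟨a, -, ha⟩ := hconj
    exact absurd ha (conj_x_ne_of_hasWrongCycle hq hwrong a)
  · exact absurd hclosure (closure_ne_of_preservesYInvariantSet hq hpreserves)
  · exact exists_conj_eq_of_isCentralizerConj hq hcentral

end Rigidity

theorem G_ne_alternatingGroup : G ≠ alternatingGroup (Fin 100) := by
  intro h
  have hx : x ∈ alternatingGroup (Fin 100) := h ▸ Subgroup.subset_closure (by simp)
  exact absurd (sign_x.symm.trans (Perm.mem_alternatingGroup.mp hx)) (by decide)

theorem G_ne_top : G ≠ ⊤ := by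
  intro h
  have hcard := card_G
  rw [h, Subgroup.card_top, Nat.card_perm, Nat.card_fin] at hcard
  have hdvd : 13 ∣ Nat.factorial 100 := Nat.dvd_factorial (by norm_num) (by norm_num)
  exact absurd (hcard ▸ hdvd) (by norm_num)

theorem isPreprimitive_G : _root_.IsPreprimitive G (Fin 100) :=
  have := isPreprimitive_of_S_le S_le_G le_rfl
  ⟨inferInstance, fun _ hB ↦ MulAction.IsPreprimitive.isTrivialBlock_of_isBlock hB⟩

end HigmanSims

open HigmanSims

theorem nice_triple_deg100_stmt9 :
    IsNice x y (x * y)⁻¹ ∧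
    x.cycleType = Multiset.replicate 25 4 ∧
    y.cycleType = Multiset.replicate 8 10 + Multiset.replicate 4 5 ∧
    ((x * y)⁻¹).cycleType = Multiset.replicate 35 2 ∧
    Nat.card ↥(Subgroup.closure {x, y} : Subgroup (Equiv.Perm (Fin 100))) = 88704000 := by
  refine ⟨⟨mul_inv_cancel _, ⟨G_ne_alternatingGroup, G_ne_top⟩, isPreprimitive_G,
    isAlmostSimple_G, permInd_add_add, fun _ _ _ ↦ isRigid, ?_⟩,
    cycleType_x, cycleType_y, cycleType_inv_mul, card_G⟩
  rintro g (rfl | rfl | rfl) k hk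
  exacts [isRational_x hk, isRational_y hk, isRational_inv_mul hk]
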